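/- Let 0 < m ≤ 1 and for u, v ∈ ℝ define the boundary term 𝔟[u^m, v^m] := (m/(1+m))(|v|^(1+m) − |u|^(1+m)) − u (v^m − u^m). Then there exists a constant c = c(m) > 0 such that for all u, v ∈ ℝ: (1/c) |u^((1+m)/2) − v^((1+m)/2)|² ≤ 𝔟[u^m, v^m] ≤ c |u^((1+m)/2) − v^((1+m)/2)|². -/

import Mathlib

/-!
Put `X = u^((1+m)/2)` and `Y = v^((1+m)/2)` (signed powers). Then
`𝔟[u^m, v^m] = (X² + m Y²)/(1+m) - u v^m`, and weighted AM-GM for `|X|` and `|Y|`, squared, says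
that `u v^m ≤ ((X + m Y)/(1+m))²`. The lower bound is then the variance identity
`(X² + m Y²)/(1+m) - ((X + m Y)/(1+m))² = m/(1+m)² (X - Y)²`.

For the upper bound, positivity of the boundary term gives
`𝔟[u^m, v^m] ≤ 𝔟[u^m, v^m] + 𝔟[v^m, u^m] = (u - v)(u^m - v^m) = X² + Y² - (u v^m + v u^m)`.
If `u v ≥ 0`, AM-GM bounds `u v^m + v u^m` below by `2 X Y`, because the product of the two terms
is `(X Y)²`. If `u v ≤ 0`, the parallelogram identity
`(u - v)(u^m - v^m) + (u + v)(u^m + v^m) = 2 (X² + Y²)` and monotonicity of the signed power yield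
the bound `2 (X² + Y²) ≤ 2 (X - Y)²`.
-/

/-- Signed power: `a^k := |a|^(k-1) a`. -/
noncomputable def spow (a k : ℝ) : ℝ := |a| ^ (k - 1) * a

/-- The boundary term `𝔟[u^m, v^m]`. -/
noncomputable def bterm (m u v : ℝ) : ℝ :=
  m / (1 + m) * (|v| ^ (1 + m) - |u| ^ (1 + m)) - u * (spow v m - spow u m)

lemma spow_neg (a k : ℝ) : spow (-a) k = -spow a k := by
  simp [spow]

lemma abs_spow (a : ℝ) {k : ℝ} (hk : k ≠ 0) : |spow a k| = |a| ^ k := by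
  rcases eq_or_ne a 0 with rfl | ha
  · simp [spow, Real.zero_rpow hk]
  · rw [spow, abs_mul, Real.abs_rpow_of_nonneg (abs_nonneg a), abs_abs,
      Real.rpow_sub_one (abs_ne_zero.2 ha), div_mul_cancel₀ _ (abs_ne_zero.2 ha)]

lemma spow_nonneg {a : ℝ} (ha : 0 ≤ a) (k : ℝ) : 0 ≤ spow a k := by
  unfold spow; positivity

lemma spow_of_nonneg {a k : ℝ} (ha : 0 ≤ a) (hk : k ≠ 0) : spow a k = a ^ k := by
  rw [← abs_of_nonneg (spow_nonneg ha k), abs_spow a hk, abs_of_nonneg ha]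

lemma sq_spow_div_two (a : ℝ) {k : ℝ} (hk : k ≠ 0) : spow a (k / 2) ^ 2 = |a| ^ k := by
  rw [← sq_abs, abs_spow a (div_ne_zero hk two_ne_zero), ← Real.rpow_mul_natCast (abs_nonneg a),
    Nat.cast_ofNat, div_mul_cancel₀ k two_ne_zero]

lemma self_mul_spow (a : ℝ) {k : ℝ} (hk : 1 + k ≠ 0) : a * spow a k = |a| ^ (1 + k) := by
  rcases eq_or_ne a 0 with rfl | ha
  · simp [Real.zero_rpow hk]
  · rw [show 1 + k = (k - 1) + 2 by ring, Real.rpow_add (abs_pos.2 ha), Real.rpow_two, sq_abs,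
      spow]
    ring

lemma mul_spow_nonneg {a b : ℝ} (hab : 0 ≤ a * b) (k : ℝ) : 0 ≤ a * spow b k := by
  rw [spow, mul_left_comm]
  positivity

lemma mul_spow_nonpos {a b : ℝ} (hab : a * b ≤ 0) (k : ℝ) : a * spow b k ≤ 0 := by
  simpa only [neg_mul, neg_nonneg] using
    mul_spow_nonneg (a := -a) (by rwa [neg_mul, neg_nonneg]) k

lemma spow_mul_spow_nonpos {a b : ℝ} (hab : a * b ≤ 0) (k l : ℝ) : spow a k * spow b l ≤ 0 :=
  mul_spow_nonpos (by rw [mul_comm] at hab ⊢; exact mul_spow_nonpos hab k) l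

lemma mul_rpow_le_sq {a b m : ℝ} (ha : 0 ≤ a) (hb : 0 ≤ b) (hm : 0 ≤ m) :
    a * b ^ m ≤ ((a ^ ((1 + m) / 2) + m * b ^ ((1 + m) / 2)) / (1 + m)) ^ 2 := by
  have hm' : 1 + m ≠ 0 := by positivity
  have sq_rpow_rpow {x : ℝ} (hx : 0 ≤ x) (w : ℝ) :
      ((x ^ ((1 + m) / 2)) ^ (w / (1 + m))) ^ 2 = x ^ w := by
    rw [← Real.rpow_mul hx, ← Real.rpow_mul_natCast hx]
    congr 1
    push_cast
    field_simp
  have amgm := Real.geom_mean_le_arith_mean2_weighted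
    (by positivity : 0 ≤ 1 / (1 + m)) (by positivity : 0 ≤ m / (1 + m))
    (Real.rpow_nonneg ha ((1 + m) / 2)) (Real.rpow_nonneg hb ((1 + m) / 2))
    (by rw [← add_div, div_self hm'])
  calc a * b ^ m
      = ((a ^ ((1 + m) / 2)) ^ (1 / (1 + m)) * (b ^ ((1 + m) / 2)) ^ (m / (1 + m))) ^ 2 := by
        rw [mul_pow, sq_rpow_rpow ha, sq_rpow_rpow hb, Real.rpow_one]
    _ ≤ (1 / (1 + m) * a ^ ((1 + m) / 2) + m / (1 + m) * b ^ ((1 + m) / 2)) ^ 2 := by gcongr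
    _ = ((a ^ ((1 + m) / 2) + m * b ^ ((1 + m) / 2)) / (1 + m)) ^ 2 := by ring

lemma mul_spow_le_sq {m : ℝ} (hm : 0 < m) (a b : ℝ) :
    a * spow b m ≤ ((spow a ((1 + m) / 2) + m * spow b ((1 + m) / 2)) / (1 + m)) ^ 2 := by
  wlog ha : 0 ≤ a generalizing a b
  · have h := this (-a) (-b) (neg_nonneg.2 (le_of_not_ge ha))
    simp only [spow_neg] at h
    convert h using 1 <;> ring
  rcases le_total 0 b with hb | hb
  · have hk : (1 + m) / 2 ≠ 0 := by positivity
    simpa only [spow_of_nonneg hb hm.ne', spow_of_nonneg ha hk, spow_of_nonneg hb hk] using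
      mul_rpow_le_sq ha hb hm.le
  · exact (mul_spow_nonpos (mul_nonpos_of_nonneg_of_nonpos ha hb) m).trans (sq_nonneg _)

lemma bterm_eq {m : ℝ} (hm : 1 + m ≠ 0) (u v : ℝ) :
    bterm m u v =
      (spow u ((1 + m) / 2) ^ 2 + m * spow v ((1 + m) / 2) ^ 2) / (1 + m) - u * spow v m := by
  rw [bterm, mul_sub u, self_mul_spow u hm, sq_spow_div_two u hm, sq_spow_div_two v hm]
  field_simp
  ring

lemma mul_sq_sub_le_bterm {m : ℝ} (hm : 0 < m) (u v : ℝ) :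
    m / (1 + m) ^ 2 * (spow u ((1 + m) / 2) - spow v ((1 + m) / 2)) ^ 2 ≤ bterm m u v := by
  have hm' : 1 + m ≠ 0 := by positivity
  set X := spow u ((1 + m) / 2)
  set Y := spow v ((1 + m) / 2)
  calc m / (1 + m) ^ 2 * (X - Y) ^ 2
      = (X ^ 2 + m * Y ^ 2) / (1 + m) - ((X + m * Y) / (1 + m)) ^ 2 := by field_simp; ring
    _ ≤ (X ^ 2 + m * Y ^ 2) / (1 + m) - u * spow v m :=
        sub_le_sub_left (mul_spow_le_sq hm u v) _
    _ = bterm m u v := (bterm_eq hm' u v).symm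

lemma bterm_nonneg {m : ℝ} (hm : 0 < m) (u v : ℝ) : 0 ≤ bterm m u v :=
  le_trans (by positivity) (mul_sq_sub_le_bterm hm u v)

lemma bterm_add_bterm_swap (m u v : ℝ) :
    bterm m u v + bterm m v u = (u - v) * (spow u m - spow v m) := by
  unfold bterm
  ring

lemma sub_mul_spow_sub_spow_nonneg {m : ℝ} (hm : 0 < m) (u v : ℝ) :
    0 ≤ (u - v) * (spow u m - spow v m) := by
  rw [← bterm_add_bterm_swap]
  exact add_nonneg (bterm_nonneg hm u v) (bterm_nonneg hm v u)

lemma two_mul_spow_mul_spow_le {m u v : ℝ} (hm : 1 + m ≠ 0) (huv : 0 ≤ u * v) :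
    2 * (spow u ((1 + m) / 2) * spow v ((1 + m) / 2)) ≤ u * spow v m + v * spow u m := by
  refine two_mul_le_add_of_sq_le_mul (mul_spow_nonneg huv m)
    (mul_spow_nonneg (by rwa [mul_comm]) m) (le_of_eq ?_)
  rw [mul_pow, sq_spow_div_two u hm, sq_spow_div_two v hm, ← self_mul_spow u hm,
    ← self_mul_spow v hm]
  ring

lemma sub_mul_spow_sub_spow_le {m : ℝ} (hm : 0 < m) (u v : ℝ) :
    (u - v) * (spow u m - spow v m) ≤
      2 * (spow u ((1 + m) / 2) - spow v ((1 + m) / 2)) ^ 2 := by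
  have hm' : 1 + m ≠ 0 := by positivity
  have hu : u * spow u m = spow u ((1 + m) / 2) ^ 2 := by
    rw [self_mul_spow u hm', sq_spow_div_two u hm']
  have hv : v * spow v m = spow v ((1 + m) / 2) ^ 2 := by
    rw [self_mul_spow v hm', sq_spow_div_two v hm']
  rcases le_total 0 (u * v) with huv | huv
  · have cross := two_mul_spow_mul_spow_le hm' huv
    linarith [sq_nonneg (spow u ((1 + m) / 2) - spow v ((1 + m) / 2))]
  · have mono := sub_mul_spow_sub_spow_nonneg hm u (-v)
    rw [spow_neg, sub_neg_eq_add, sub_neg_eq_add] at mono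
    have cross := spow_mul_spow_nonpos huv ((1 + m) / 2) ((1 + m) / 2)
    linarith

lemma bterm_le_two_mul_sq_sub {m : ℝ} (hm : 0 < m) (u v : ℝ) :
    bterm m u v ≤ 2 * (spow u ((1 + m) / 2) - spow v ((1 + m) / 2)) ^ 2 :=
  calc bterm m u v ≤ bterm m u v + bterm m v u := le_add_of_nonneg_right (bterm_nonneg hm v u)
    _ = (u - v) * (spow u m - spow v m) := bterm_add_bterm_swap m u v
    _ ≤ _ := sub_mul_spow_sub_spow_le hm u v

theorem boundary_term_equivalence_general (m : ℝ) (hm : 0 < m) :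
    ∃ c : ℝ, 0 < c ∧ ∀ u v : ℝ,
      (1 / c) * |spow u ((1 + m) / 2) - spow v ((1 + m) / 2)| ^ 2 ≤ bterm m u v ∧
      bterm m u v ≤ c * |spow u ((1 + m) / 2) - spow v ((1 + m) / 2)| ^ 2 := by
  have two_le : 2 ≤ (1 + m) ^ 2 / m := by
    rw [le_div_iff₀ hm]
    linarith [sq_nonneg m]
  refine ⟨(1 + m) ^ 2 / m, by positivity, fun u v => ?_⟩
  rw [one_div_div, sq_abs]
  exact ⟨mul_sq_sub_le_bterm hm u v, (bterm_le_two_mul_sq_sub hm u v).trans (by gcongr)⟩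

/-- For `0 < m ≤ 1` there is `c = c(m) > 0` such that for all `u, v ∈ ℝ`:
`(1/c)|u^((1+m)/2) − v^((1+m)/2)|² ≤ 𝔟[u^m, v^m] ≤ c|u^((1+m)/2) − v^((1+m)/2)|²`. -/
theorem boundary_term_equivalence (m : ℝ) (hm0 : 0 < m) (hm1 : m ≤ 1) :
    ∃ c : ℝ, 0 < c ∧ ∀ u v : ℝ,
      (1 / c) * |spow u ((1 + m) / 2) - spow v ((1 + m) / 2)| ^ 2 ≤ bterm m u v ∧
      bterm m u v ≤ c * |spow u ((1 + m) / 2) - spow v ((1 + m) / 2)| ^ 2 :=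
  boundary_term_equivalence_general m hm0
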